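/- Let n, q be natural numbers with n ≥ q+1. Then the horizontal player H has a winning strategy for the q-double-response game on S_{∞×n}: she can forever prevent the vertical player V from claiming a set of edges whose dual edges contain a top-bottom crossing dual path. -/

import Mathlib

namespace CrossingGames

/-- A vertex of the square integer lattice `ℤ²`. -/
abbrev Vtx : Type := ℤ × ℤ

/-- An edge of the square integer lattice `ℤ²`, encoded as a base vertex together with a
direction: `(v, true)` is the horizontal edge joining `v = (x,y)` to `(x+1,y)`, while
`(v, false)` is the vertical edge joining `v = (x,y)` to `(x,y+1)`. -/
abbrev Edge : Type := Vtx × Bool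

/-- The two endpoints of an edge. -/
def ends (e : Edge) : Vtx × Vtx :=
  (e.1, if e.2 then (e.1.1 + 1, e.1.2) else (e.1.1, e.1.2 + 1))

/-- The edge `e` joins the vertices `u` and `v`. -/
def joins (e : Edge) (u v : Vtx) : Prop :=
  ((ends e).1 = u ∧ (ends e).2 = v) ∨ ((ends e).1 = v ∧ (ends e).2 = u)

/-- The vertex set of the grid `Λ_{m×n}`: all `(x,y) ∈ ℤ²` with `1 ≤ x ≤ m`, `1 ≤ y ≤ n`. -/
def lamVtx (m n : ℕ) : Set Vtx :=
  {v | 1 ≤ v.1 ∧ v.1 ≤ (m : ℤ) ∧ 1 ≤ v.2 ∧ v.2 ≤ (n : ℤ)}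

/-- The edge set of the grid `Λ_{m×n}`: lattice edges with both endpoints in `Λ_{m×n}`. -/
def lamEdges (m n : ℕ) : Set Edge :=
  {e | (ends e).1 ∈ lamVtx m n ∧ (ends e).2 ∈ lamVtx m n}

/-- The edge set of the board `S_{m×n}`: the grid `Λ_{m×n}` with all of its leftmost and
rightmost vertical edges deleted. -/
def sEdges (m n : ℕ) : Set Edge :=
  {e ∈ lamEdges m n | ¬ (e.2 = false ∧ (e.1.1 = 1 ∨ e.1.1 = (m : ℤ)))}

/-- The list of consecutive pairs of a list. -/
def cp {α : Type*} (l : List α) : List (α × α) := l.zip l.tail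

/-- `S` contains all the edges of a left-right crossing path of a board with `m` columns
and `n` rows: a path of edges of `S` joining a vertex `(1,y)` on the left-hand side of the
board to a vertex `(m,y')` on its right-hand side. -/
def HasCrossing (m n : ℕ) (S : Set Edge) : Prop :=
  ∃ l : List Vtx,
    (∃ v, l.head? = some v ∧ v.1 = 1) ∧
    (∃ v, l.getLast? = some v ∧ v.1 = (m : ℤ)) ∧
    (∀ v ∈ l, v ∈ lamVtx m n) ∧
    ∀ p ∈ cp l, ∃ e ∈ S, joins e p.1 p.2

/-- A dual vertex: `(a,b) : ℤ × ℤ` encodes the dual vertex `(a + 0.5, b + 0.5)` of the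
dual lattice `ℤ² + (0.5, 0.5)`. Dual edges are encoded like lattice edges, in these
shifted coordinates. -/
abbrev DVtx : Type := Vtx

/-- The dual edge `e*` of a lattice edge `e`: the unique edge of the dual lattice
crossing `e` (i.e. having the same midpoint). The horizontal edge `(x+0.5, y)` has the
vertical dual edge joining `(x+0.5, y−0.5)` to `(x+0.5, y+0.5)`, and the vertical edge
`(x, y+0.5)` has the horizontal dual edge joining `(x−0.5, y+0.5)` to `(x+0.5, y+0.5)`,
expressed here in the shifted integer coordinates. -/
def dualEdge (e : Edge) : Edge :=
  if e.2 then ((e.1.1, e.1.2 - 1), false) else ((e.1.1 - 1, e.1.2), true)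

/-- `D` (a set of dual edges) contains all the dual edges of a top-bottom crossing dual
path of a board of width `n`: a dual path joining a dual vertex with second coordinate
`n + 0.5` (encoded `n`) to a dual vertex with second coordinate `0.5` (encoded `0`). -/
def HasDualCrossing (n : ℕ) (D : Set Edge) : Prop :=
  ∃ l : List DVtx,
    (∃ v, l.head? = some v ∧ v.2 = (n : ℤ)) ∧
    (∃ v, l.getLast? = some v ∧ v.2 = 0) ∧
    ∀ p ∈ cp l, ∃ d ∈ D, joins d p.1 p.2

/-- The edge set of the infinite strip `S_{∞×n}`: all lattice edges with both endpoints
having second coordinate in `[1, n]` (the first coordinate is unrestricted). -/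
def sInfEdges (n : ℕ) : Set Edge :=
  {e | 1 ≤ (ends e).1.2 ∧ (ends e).1.2 ≤ (n : ℤ) ∧ 1 ≤ (ends e).2.2 ∧ (ends e).2.2 ≤ (n : ℤ)}

/-- A strategy in the `q`-double-response game: given the list of all moves played so far
(oldest first), produce the next move (a finite set of edges to claim). -/
abbrev DStrategy : Type := List (Finset Edge) → Finset Edge

/-- The union of the moves sitting in positions of the given parity of a history
(`true`: positions 0, 2, 4, …, i.e. the vertical player's moves; `false`: positions
1, 3, 5, …, i.e. the horizontal player's moves). -/
def altUnion : Bool → List (Finset Edge) → Finset Edge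
  | _, [] => ∅
  | true, mv :: h => mv ∪ altUnion false h
  | false, _ :: h => altUnion true h

/-- All edges claimed so far in a history. -/
def allClaimed (h : List (Finset Edge)) : Finset Edge := h.foldr (· ∪ ·) ∅

/-- The history of moves (oldest first) after `t` full rounds of the double-response
game, when the vertical player (moving first) uses strategy `σV` and the horizontal
player uses strategy `σH`. -/
def histD (σV σH : DStrategy) : ℕ → List (Finset Edge)
  | 0 => []
  | t + 1 =>
    let h := histD σV σH t
    h ++ [σV h, σH (h ++ [σV h])]

/-- The vertical player `V` always moves legally in the `q`-double-response game on
`S_{∞×n}`: on each turn he claims some number `r` with `1 ≤ r ≤ q` of as-yet-unclaimed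
edges of the board. -/
def VLegal (n q : ℕ) (σV σH : DStrategy) : Prop :=
  ∀ t, (↑(σV (histD σV σH t)) : Set Edge) ⊆ sInfEdges n \ ↑(allClaimed (histD σV σH t)) ∧
    1 ≤ (σV (histD σV σH t)).card ∧ (σV (histD σV σH t)).card ≤ q

/-- The horizontal player `H` always moves legally in the `q`-double-response game on
`S_{∞×n}`: if `V` has just claimed `r` edges, she answers by claiming `2r`
as-yet-unclaimed edges of the board. -/
def HLegal (n : ℕ) (σV σH : DStrategy) : Prop :=
  ∀ t, (↑(σH (histD σV σH t ++ [σV (histD σV σH t)])) : Set Edge) ⊆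
      sInfEdges n \ ↑(allClaimed (histD σV σH t ++ [σV (histD σV σH t)])) ∧
    (σH (histD σV σH t ++ [σV (histD σV σH t)])).card = 2 * (σV (histD σV σH t)).card


def Le (S : Set Edge) (k : ℕ) : Prop := ∃ T : Finset Edge, S ⊆ ↑T ∧ T.card ≤ k

lemma Le.mono {S S' : Set Edge} {k k' : ℕ} (h : Le S k) (hs : S' ⊆ S) (hk : k ≤ k') : Le S' k' := by
  obtain ⟨T, h1, h2⟩ := h
  exact ⟨T, hs.trans h1, h2.trans hk⟩

lemma Le.union {S S' : Set Edge} {k k' : ℕ} (h : Le S k) (h' : Le S' k') : Le (S ∪ S') (k + k') := by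
  obtain ⟨T, h1, h2⟩ := h
  obtain ⟨T', h1', h2'⟩ := h'
  refine ⟨T ∪ T', ?_, (Finset.card_union_le _ _).trans (by omega)⟩
  rw [Finset.coe_union]
  exact Set.union_subset_union h1 h1'

/-- combined counting step -/
lemma Le.comb {S A X : Set Edge} {p : Edge} {k l m : ℕ} (hS : Le S k) (hA : Le A l)
    (hX : X ⊆ S ∪ A) (hp : p ∉ X)
    (hm : k + l ≤ m ∨ (p ∈ S ∧ k + l ≤ m + 1) ∨ (p ∈ A ∧ k + l ≤ m + 1) ∨
      (p ∈ S ∧ p ∈ A ∧ k + l ≤ m + 2)) : Le X m := by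
  obtain ⟨T, h1, h2⟩ := hS
  obtain ⟨T', h1', h2'⟩ := hA
  refine ⟨T.erase p ∪ T'.erase p, ?_, ?_⟩
  · intro e he
    have hne : e ≠ p := fun h => hp (h ▸ he)
    rcases hX he with h | h
    · have := h1 h
      simp_all
    · have := h1' h
      simp_all
  · refine (Finset.card_union_le _ _).trans ?_
    have e1 : (T.erase p).card ≤ T.card := Finset.card_erase_le
    have e2 : (T'.erase p).card ≤ T'.card := Finset.card_erase_le
    have e3 : p ∈ S → (T.erase p).card + 1 = T.card := fun h => Finset.card_erase_add_one (h1 h)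
    have e4 : p ∈ A → (T'.erase p).card + 1 = T'.card := fun h => Finset.card_erase_add_one (h1' h)
    rcases hm with h | ⟨a, h⟩ | ⟨a, h⟩ | ⟨a, b, h⟩
    · omega
    · have := e3 a; omega
    · have := e4 a; omega
    · have := e3 a; have := e4 b; omega

lemma Le.toFinset {S : Set Edge} {k : ℕ} (h : Le S k) : ∃ B : Finset Edge, (B : Set Edge) = S ∧ B.card ≤ k := by
  classical
  obtain ⟨T, h1, h2⟩ := h
  refine ⟨T.filter (· ∈ S), ?_, (Finset.card_filter_le _ _).trans h2⟩
  ext e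
  simp only [Finset.coe_filter, Set.mem_ofPred_eq]
  exact ⟨fun h => h.2, fun h => ⟨h1 h, h⟩⟩

lemma exists_block {S1 S2 S : Set Edge} {k : ℕ} (h12 : S1 ⊆ S2) (h2S : S2 ⊆ S)
    (h1 : Le S1 k) (h2 : Le S2 (k + 1)) (h : Le S (k + 2)) :
    ∃ B : Finset Edge, (B : Set Edge) ⊆ S ∧ B.card ≤ k ∧ S1 ⊆ ↑B ∧ Le (S2 \ ↑B) 1 ∧ Le (S \ ↑B) 2 := by
  obtain ⟨T1, rfl, c1⟩ := h1.toFinset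
  obtain ⟨T2, rfl, c2⟩ := h2.toFinset
  obtain ⟨T, rfl, c3⟩ := h.toFinset
  have h12 : T1 ⊆ T2 := by exact_mod_cast h12
  have h2S : T2 ⊆ T := by exact_mod_cast h2S
  -- first enlarge inside T2
  obtain ⟨B1, a1, a2, a3⟩ : ∃ B1, T1 ⊆ B1 ∧ B1 ⊆ T2 ∧ B1.card = max T1.card (min k T2.card) := by
    apply Finset.exists_subsuperset_card_eq h12
    · exact le_max_left _ _
    · exact max_le (Finset.card_le_card h12) (min_le_right _ _)
  obtain ⟨B, b1, b2, b3⟩ : ∃ B, B1 ⊆ B ∧ B ⊆ T ∧ B.card = max B1.card (min k T.card) := by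
    apply Finset.exists_subsuperset_card_eq (a2.trans h2S)
    · exact le_max_left _ _
    · exact max_le (Finset.card_le_card (a2.trans h2S)) (min_le_right _ _)
  refine ⟨B, by exact_mod_cast b2, by omega, by exact_mod_cast a1.trans b1, ?_, ?_⟩
  · refine ⟨T2 \ B1, ?_, ?_⟩
    · rw [Finset.coe_sdiff]
      exact Set.sdiff_subset_sdiff_right (by exact_mod_cast b1)
    · rw [Finset.card_sdiff_of_subset a2]; omega
  · refine ⟨T \ B, ?_, ?_⟩
    · rw [Finset.coe_sdiff]
    · rw [Finset.card_sdiff_of_subset b2]; omega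

lemma exists_max (G Q : Finset Vtx → Prop) (N : ℕ) (W0 : Finset Vtx) (h0 : G W0)
    (hb : ∀ W, G W → W.card ≤ N)
    (step : ∀ W, G W → ¬ Q W → ∃ W', G W' ∧ W.card < W'.card) : ∃ W, G W ∧ Q W := by
  by_contra hcon
  push Not at hcon
  have : ∀ k, ∃ W, G W ∧ k ≤ W.card := by
    intro k
    induction k with
    | zero => exact ⟨W0, h0, Nat.zero_le _⟩
    | succ k ih =>
      obtain ⟨W, h1, h2⟩ := ih
      obtain ⟨W', h3, h4⟩ := step W h1 (hcon W h1)
      exact ⟨W', h3, by omega⟩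
  obtain ⟨W, h1, h2⟩ := this (N + 1)
  have := hb W h1
  omega

/-- tail and head of the dual edge of `e`, oriented right / up -/
def tl (e : Edge) : Vtx := if e.2 then (e.1.1, e.1.2 - 1) else (e.1.1 - 1, e.1.2)
def hd (e : Edge) : Vtx := e.1

structure Inv (n : ℕ) (F : Set Edge) (c : Vtx → Vtx) : Prop where
  range : ∀ v, c v = (0, 0) ∨ c v = (0, (n : ℤ)) ∨ (0 < (c v).2 ∧ (c v).2 < n)
  bot : ∀ x, c (x, 0) = (0, 0)
  top : ∀ x, c (x, (n : ℤ)) = (0, (n : ℤ))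
  edge1 : ∀ e ∈ F, (c (hd e)).2 ≤ (c (tl e)).2 + 1
  edge2 : ∀ e ∈ F, (c (tl e)).2 ≤ (c (hd e)).2 ∨ (c (tl e)).2 ≤ 1
  outs : ∀ D, D ≠ (0, 0) → D ≠ (0, (n : ℤ)) → Le {e | e ∈ F ∧ c (tl e) = D ∧ c (hd e) ≠ D} 2
  ins : ∀ D, D ≠ (0, 0) → D ≠ (0, (n : ℤ)) → Le {e | e ∈ F ∧ c (hd e) = D ∧ c (tl e) ≠ D} 2
  dn : ∀ D, D ≠ (0, 0) → D ≠ (0, (n : ℤ)) →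
    Le {e | e ∈ F ∧ c (hd e) = D ∧ (c (tl e)).2 < D.2} 1

lemma Inv.anti {n : ℕ} {F F' : Set Edge} {c : Vtx → Vtx} (h : Inv n F c) (hF : F' ⊆ F) :
    Inv n F' c where
  range := h.range
  bot := h.bot
  top := h.top
  edge1 := fun e he => h.edge1 e (hF he)
  edge2 := fun e he => h.edge2 e (hF he)
  outs := fun D h1 h2 => (h.outs D h1 h2).mono (fun _ he => ⟨hF he.1, he.2⟩) le_rfl
  ins := fun D h1 h2 => (h.ins D h1 h2).mono (fun _ he => ⟨hF he.1, he.2⟩) le_rfl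
  dn := fun D h1 h2 => (h.dn D h1 h2).mono (fun _ he => ⟨hF he.1, he.2⟩) le_rfl

def c0 (n : ℕ) (v : Vtx) : Vtx :=
  if v.2 ≤ 0 then (0, 0) else if (n : ℤ) ≤ v.2 then (0, (n : ℤ)) else v

lemma c0_snd (n : ℕ) (v : Vtx) :
    (c0 n v).2 = if v.2 ≤ 0 then 0 else if (n : ℤ) ≤ v.2 then (n : ℤ) else v.2 := by
  unfold c0; split_ifs <;> rfl

lemma c0_eq {n : ℕ} {v D : Vtx} (h : c0 n v = D) (h1 : D ≠ (0, 0)) (h2 : D ≠ (0, (n : ℤ))) :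
    v = D ∧ 0 < D.2 ∧ D.2 < n := by
  unfold c0 at h
  split_ifs at h
  · exact absurd h.symm h1
  · exact absurd h.symm h2
  · subst h; exact ⟨rfl, by omega, by omega⟩

lemma Inv.init (n : ℕ) (hn : 2 ≤ n) : Inv n (sInfEdges n) (c0 n) where
  range := by
    intro v
    unfold c0
    split_ifs
    · exact Or.inl rfl
    · exact Or.inr (Or.inl rfl)
    · right; right; omega
  bot := by intro x; simp [c0]
  top := by
    intro x
    have : ¬ ((n : ℤ) ≤ 0) := by omega
    unfold c0
    rw [if_neg this, if_pos le_rfl]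
  edge1 := by
    rintro ⟨⟨x, y⟩, b⟩ he
    rw [c0_snd, c0_snd]
    cases b <;> simp [sInfEdges, ends, tl, hd] at he ⊢ <;> split_ifs <;> omega
  edge2 := by
    rintro ⟨⟨x, y⟩, b⟩ he
    rw [c0_snd, c0_snd]
    cases b <;> simp [sInfEdges, ends, tl, hd] at he ⊢ <;> split_ifs <;> omega
  outs := by
    rintro ⟨x, y⟩ h1 h2
    refine ⟨{((x, y + 1), true), ((x + 1, y), false)}, ?_, Finset.card_le_two⟩
    rintro ⟨⟨x', y'⟩, b⟩ ⟨he, h3, -⟩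
    obtain ⟨h3, -, -⟩ := c0_eq h3 h1 h2
    cases b <;> simp [tl] at h3 ⊢ <;> omega
  ins := by
    rintro ⟨x, y⟩ h1 h2
    refine ⟨{((x, y), true), ((x, y), false)}, ?_, Finset.card_le_two⟩
    rintro ⟨⟨x', y'⟩, b⟩ ⟨he, h3, -⟩
    obtain ⟨h3, -, -⟩ := c0_eq h3 h1 h2
    cases b <;> simp [hd] at h3 ⊢ <;> omega
  dn := by
    rintro ⟨x, y⟩ h1 h2
    refine ⟨{((x, y), true)}, ?_, by simp⟩
    rintro ⟨⟨x', y'⟩, b⟩ ⟨he, h3, h4⟩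
    obtain ⟨h3, h5, h6⟩ := c0_eq h3 h1 h2
    rw [c0_snd] at h4
    cases b
    · exfalso
      simp [hd, tl] at h3 h4 h5 h6
      obtain ⟨rfl, rfl⟩ := h3
      split_ifs at h4 <;> omega
    · simp [hd] at h3 ⊢; omega

lemma filter_grow {P : Finset Edge} {c : Vtx → Vtx} {W : Finset Vtx} {p : Edge} {A : Vtx} {r : ℕ}
    (hp : p ∈ P) (hA : A ∉ W)
    (h : (c (tl p) ∈ W ∧ c (hd p) = A) ∨ (c (tl p) = A ∧ c (hd p) ∈ W))
    (hr : r ≤ (P.filter (fun e => c (tl e) ∈ W ∧ c (hd e) ∈ W)).card) :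
    r + 1 ≤ (P.filter (fun e => c (tl e) ∈ insert A W ∧ c (hd e) ∈ insert A W)).card := by
  have : insert p (P.filter (fun e => c (tl e) ∈ W ∧ c (hd e) ∈ W)) ⊆
      P.filter (fun e => c (tl e) ∈ insert A W ∧ c (hd e) ∈ insert A W) := by
    intro e he
    simp only [Finset.mem_insert, Finset.mem_filter] at he ⊢
    grind
  have h2 := Finset.card_le_card this
  rw [Finset.card_insert_of_notMem] at h2
  · omega
  · simp only [Finset.mem_filter]; grind

def mrg (c : Vtx → Vtx) (W : Finset Vtx) (C : Vtx) (v : Vtx) : Vtx := if c v ∈ W then C else c v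

lemma mrg_in {c : Vtx → Vtx} {W : Finset Vtx} {C v : Vtx} (h : c v ∈ W) : mrg c W C v = C := if_pos h
lemma mrg_out {c : Vtx → Vtx} {W : Finset Vtx} {C v : Vtx} (h : c v ∉ W) : mrg c W C v = c v := if_neg h

set_option maxHeartbeats 4000000 in
lemma step_bot {n : ℕ} {F : Set Edge} {c : Vtx → Vtx} (hI : Inv n F c) (P : Finset Edge)
    (hP : (P : Set Edge) ⊆ F) (hc : P.card < n) (p0 : Edge) (hp0 : p0 ∈ P)
    (hp0' : c (tl p0) = (0, 0) ∨ c (hd p0) = (0, 0)) :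
    ∃ (P1 B : Finset Edge) (c' : Vtx → Vtx), P1 ⊆ P ∧ P1.Nonempty ∧ (B : Set Edge) ⊆ F \ ↑P ∧
      B.card ≤ 2 * P1.card ∧ Inv n (F \ ↑B) c' ∧ (∀ u v, c u = c v → c' u = c' v) ∧
      ∀ e ∈ P1, c' (tl e) = c' (hd e) := by
  classical
  let bad : Finset Vtx → Set Edge := fun W => {e | e ∈ F ∧
    ((c (tl e) ∈ W ∧ c (tl e) ≠ (0, 0) ∧ c (hd e) ∉ W) ∨
     (c (hd e) ∈ W ∧ c (hd e) ≠ (0, 0) ∧ c (tl e) ∉ W ∧ 2 ≤ (c (tl e)).2))}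
  have hlev0 : ∀ v, 0 ≤ (c v).2 := by
    intro v
    rcases hI.range v with h | h | h
    · rw [h]
    · rw [h]; simp
    · omega
  let G : Finset Vtx → Prop := fun W => ∃ r, W.card = r + 1 ∧ ((0, 0) : Vtx) ∈ W ∧
    r ≤ (P.filter (fun e => c (tl e) ∈ W ∧ c (hd e) ∈ W)).card ∧
    (∀ A ∈ W, A.2 ≤ r) ∧ Le (bad W) (2 * r)
  obtain ⟨W, ⟨r, hcard, hbot, hr, hlev, hbad⟩, hQ⟩ : ∃ W, G W ∧ (∀ p ∈ P, c (tl p) ∈ W ↔ c (hd p) ∈ W) := by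
    apply exists_max G (fun W => ∀ p ∈ P, c (tl p) ∈ W ↔ c (hd p) ∈ W) (P.card + 1) {(0, 0)}
    · refine ⟨0, by simp, by simp, by simp, by simp, ∅, ?_, by simp⟩
      rintro e ⟨-, h⟩
      simp only [Finset.mem_singleton] at h
      grind
    · rintro W ⟨r, h1, -, h2, -⟩
      have := Finset.card_filter_le P (fun e => c (tl e) ∈ W ∧ c (hd e) ∈ W)
      omega
    · rintro W ⟨r, hcard, hbot, hr, hlev, hbad⟩ hQ
      obtain ⟨p, hpP, A, hAW, hpA⟩ : ∃ p ∈ P, ∃ A, A ∉ W ∧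
          ((c (tl p) ∈ W ∧ c (hd p) = A) ∨ (c (tl p) = A ∧ c (hd p) ∈ W)) := by
        by_contra hcon
        push Not at hcon
        apply hQ
        intro p hp
        have h1 := hcon p hp (c (hd p))
        have h2 := hcon p hp (c (tl p))
        grind
      have hpF := hP hpP
      have hgrow := filter_grow hpP hAW hpA hr
      have hA0 : A ≠ (0, 0) := fun h => hAW (h ▸ hbot)
      have e1 := hI.edge1 p hpF
      have e2 := hI.edge2 p hpF
      have hAr : A.2 ≤ r + 1 := by
        rcases hpA with ⟨h1, h2⟩ | ⟨h1, h2⟩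
        · rw [h2] at e1
          have := hlev _ h1
          omega
        · rw [h1] at e2
          have := hlev _ h2
          omega
      have hfc := Finset.card_filter_le P (fun e => c (tl e) ∈ insert A W ∧ c (hd e) ∈ insert A W)
      have hAn : A ≠ (0, (n : ℤ)) := by
        rintro rfl
        simp only at hAr
        omega
      have hA1 : 0 < A.2 := by
        rcases hpA with ⟨h1, h2⟩ | ⟨h1, h2⟩
        · have := hI.range (hd p)
          rw [h2] at this
          grind
        · have := hI.range (tl p)
          rw [h1] at this
          grind
      refine ⟨insert A W, ⟨r + 1, ?_, ?_, ?_, ?_, ?_⟩, ?_⟩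
      · rw [Finset.card_insert_of_notMem hAW, hcard]
      · exact Finset.mem_insert_of_mem hbot
      · exact hgrow
      · intro D hD
        rcases Finset.mem_insert.1 hD with rfl | h
        · push_cast; exact hAr
        · have := hlev D h
          push_cast; omega
      · have hpn : p ∉ bad (insert A W) := by
          rintro ⟨-, h⟩
          simp only [Finset.mem_insert] at h
          grind
        by_cases hA2 : A.2 ≤ 1
        · refine Le.comb hbad (hI.outs A hA0 hAn) ?_ hpn (Or.inl (by omega))
          rintro e ⟨he, h⟩
          have f1 := hI.edge2 e he
          simp only [Finset.mem_insert] at h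
          by_cases hh : c (hd e) = A
          · rw [hh] at f1
            left
            refine ⟨he, ?_⟩
            rcases h with h | h
            · grind
            · omega
          · by_cases ht : c (tl e) = A
            · right
              exact ⟨he, ht, hh⟩
            · left
              refine ⟨he, ?_⟩
              grind
        · have hpb : p ∈ bad W := by
            refine ⟨hpF, ?_⟩
            rcases hpA with ⟨h1, h2⟩ | ⟨h1, h2⟩
            · left
              refine ⟨h1, ?_, by rw [h2]; exact hAW⟩
              intro h3
              rw [h2, h3] at e1
              simp only at e1
              omega
            · right
              rw [h1] at e2 ⊢
              refine ⟨h2, ?_, hAW, by omega⟩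
              intro h3
              rw [h3] at e2
              simp only at e2
              omega
          refine Le.comb (p := p) hbad ((hI.outs A hA0 hAn).union (hI.ins A hA0 hAn)) ?_ hpn
            (Or.inr (Or.inr (Or.inr ⟨hpb, ?_, by omega⟩)))
          · rintro e ⟨he, h⟩
            simp only [Finset.mem_insert] at h
            by_cases hh : c (hd e) = A
            · by_cases ht : c (tl e) = A
              · grind
              · right; right
                exact ⟨he, hh, ht⟩
            · by_cases ht : c (tl e) = A
              · right; left
                exact ⟨he, ht, hh⟩
              · left
                refine ⟨he, ?_⟩
                grind
          · rcases hpA with ⟨h1, h2⟩ | ⟨h1, h2⟩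
            · right
              exact ⟨hpF, h2, fun h => hAW (h ▸ h1)⟩
            · left
              exact ⟨hpF, h1, fun h => hAW (h ▸ h2)⟩
      · rw [Finset.card_insert_of_notMem hAW]; omega
  obtain ⟨B, hB, hBc⟩ := hbad.toFinset
  have hfc := Finset.card_filter_le P (fun e => c (tl e) ∈ W ∧ c (hd e) ∈ W)
  have htop : ((0, (n : ℤ)) : Vtx) ∉ W := by
    intro h
    have := hlev _ h
    simp only at this
    omega
  have hnb : ∀ e ∈ F \ (B : Set Edge), e ∈ F ∧
      ¬ ((c (tl e) ∈ W ∧ c (tl e) ≠ (0, 0) ∧ c (hd e) ∉ W) ∨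
     (c (hd e) ∈ W ∧ c (hd e) ≠ (0, 0) ∧ c (tl e) ∉ W ∧ 2 ≤ (c (tl e)).2)) := by
    rintro e ⟨h1, h2⟩
    rw [hB] at h2
    exact ⟨h1, fun h => h2 ⟨h1, h⟩⟩
  refine ⟨P.filter (fun e => c (tl e) ∈ W ∧ c (hd e) ∈ W), B, mrg c W (0, 0),
    Finset.filter_subset _ _, ⟨p0, ?_⟩, ?_, by omega, ?_, ?_, ?_⟩
  · have := hQ p0 hp0
    simp only [Finset.mem_filter]
    refine ⟨hp0, ?_⟩
    rcases hp0' with h | h <;> rw [h] at this ⊢ <;> grind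
  · intro e he
    rw [hB] at he
    refine ⟨he.1, fun hP => ?_⟩
    have := hQ e hP
    have := he.2
    grind
  · constructor
    · intro v
      by_cases h : c v ∈ W
      · rw [mrg_in h]; exact Or.inl rfl
      · rw [mrg_out h]; exact hI.range v
    · intro x
      rw [mrg_in]
      rw [hI.bot]; exact hbot
    · intro x
      rw [mrg_out]
      · exact hI.top x
      · rw [hI.top]; exact htop
    · intro e he
      obtain ⟨he, h⟩ := hnb e he
      have e1 := hI.edge1 e he
      by_cases h1 : c (hd e) ∈ W
      · rw [mrg_in h1]
        by_cases h2 : c (tl e) ∈ W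
        · rw [mrg_in h2]; simp
        · rw [mrg_out h2]
          have := hlev0 (tl e)
          simp only; omega
      · rw [mrg_out h1]
        by_cases h2 : c (tl e) ∈ W
        · rw [mrg_in h2]
          have : c (tl e) = (0, 0) := by grind
          rwa [this] at e1
        · rwa [mrg_out h2]
    · intro e he
      obtain ⟨he, h⟩ := hnb e he
      have e1 := hI.edge2 e he
      by_cases h2 : c (tl e) ∈ W
      · rw [mrg_in h2]; right; simp
      · rw [mrg_out h2]
        by_cases h1 : c (hd e) ∈ W
        · rw [mrg_in h1]
          by_cases h3 : c (hd e) = (0, 0)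
          · rwa [h3] at e1
          · right
            by_contra h4
            apply h
            right
            exact ⟨h1, h3, h2, by omega⟩
        · rwa [mrg_out h1]
    · intro D hD0 hDn
      refine (hI.outs D hD0 hDn).mono ?_ le_rfl
      rintro e ⟨he, h1, h2⟩
      unfold mrg at h1 h2
      refine ⟨he.1, ?_⟩
      split_ifs at h1 h2 <;> grind
    · intro D hD0 hDn
      refine (hI.ins D hD0 hDn).mono ?_ le_rfl
      rintro e ⟨he, h1, h2⟩
      unfold mrg at h1 h2
      refine ⟨he.1, ?_⟩
      split_ifs at h1 h2 <;> grind
    · intro D hD0 hDn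
      refine (hI.dn D hD0 hDn).mono ?_ le_rfl
      rintro e ⟨he, h1, h2⟩
      have hn := hnb e he
      have h3 : c (hd e) ∉ W := by
        intro h3
        rw [mrg_in h3] at h1
        exact hD0 h1.symm
      rw [mrg_out h3] at h1
      refine ⟨he.1, h1, ?_⟩
      by_cases h4 : c (tl e) ∈ W
      · rw [mrg_in h4] at h2
        have : c (tl e) = (0, 0) := by grind
        rwa [this]
      · rwa [mrg_out h4] at h2
  · intro u v h
    simp only [mrg, h]
  · intro e he
    simp only [Finset.mem_filter] at he
    rw [mrg_in he.2.1, mrg_in he.2.2]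

set_option maxHeartbeats 4000000 in
lemma step_top {n : ℕ} {F : Set Edge} {c : Vtx → Vtx} (hI : Inv n F c) (P : Finset Edge)
    (hP : (P : Set Edge) ⊆ F) (hPne : P.Nonempty)
    (hp0 : ∀ p ∈ P, c (tl p) ≠ (0, 0) ∧ c (hd p) ≠ (0, 0)) :
    ∃ (P1 B : Finset Edge) (c' : Vtx → Vtx), P1 ⊆ P ∧ P1.Nonempty ∧ (B : Set Edge) ⊆ F \ ↑P ∧
      B.card ≤ 2 * P1.card ∧ Inv n (F \ ↑B) c' ∧ (∀ u v, c u = c v → c' u = c' v) ∧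
      ∀ e ∈ P1, c' (tl e) = c' (hd e) := by
  classical
  have hran : ∀ v, c v ≠ (0, 0) → c v = (0, (n : ℤ)) ∨ (0 < (c v).2 ∧ (c v).2 < n) := by
    intro v hv
    exact (hI.range v).resolve_left hv
  let L : Finset Vtx := P.image (fun e => c (tl e)) ∪ P.image (fun e => c (hd e))
  have hLt : ∀ p ∈ P, c (tl p) ∈ L := fun p hp =>
    Finset.mem_union_left _ (Finset.mem_image_of_mem _ hp)
  have hLh : ∀ p ∈ P, c (hd p) ∈ L := fun p hp =>
    Finset.mem_union_right _ (Finset.mem_image_of_mem _ hp)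
  have hLr : ∀ A ∈ L, A ≠ (0, 0) ∧ (A = (0, (n : ℤ)) ∨ (0 < A.2 ∧ A.2 < n)) := by
    intro A hA
    rcases Finset.mem_union.1 hA with h | h
    · obtain ⟨e, he, rfl⟩ := Finset.mem_image.1 h
      exact ⟨(hp0 e he).1, hran _ (hp0 e he).1⟩
    · obtain ⟨e, he, rfl⟩ := Finset.mem_image.1 h
      exact ⟨(hp0 e he).2, hran _ (hp0 e he).2⟩
  obtain ⟨p1, hp1⟩ := hPne
  obtain ⟨C, hCL, hCmax⟩ := Finset.exists_max_image L (fun A => A.2) ⟨_, hLt p1 hp1⟩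
  have hC0 := (hLr C hCL).1
  have hCr := (hLr C hCL).2
  obtain ⟨p0, hp0P, hp0C⟩ : ∃ p ∈ P, c (tl p) = C ∨ c (hd p) = C := by
    rcases Finset.mem_union.1 hCL with h | h
    · obtain ⟨e, he, h⟩ := Finset.mem_image.1 h
      exact ⟨e, he, Or.inl h⟩
    · obtain ⟨e, he, h⟩ := Finset.mem_image.1 h
      exact ⟨e, he, Or.inr h⟩
  let oS : Finset Vtx → Set Edge := fun W => {e | e ∈ F ∧ c (tl e) ∈ W ∧ c (hd e) ∉ W}
  let iS : Finset Vtx → Set Edge := fun W => {e | e ∈ F ∧ c (hd e) ∈ W ∧ c (tl e) ∉ W}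
  let oL : Finset Vtx → Set Edge := fun W => {e | e ∈ oS W ∧ (c (hd e)).2 < C.2 ∧ 1 < C.2}
  let iD : Finset Vtx → Set Edge := fun W => {e | e ∈ iS W ∧ (c (tl e)).2 < C.2}
  let iF : Finset Vtx → Set Edge := fun W => {e | e ∈ iS W ∧ (c (tl e)).2 < C.2 - 1}
  let G : Finset Vtx → Prop := fun W => ∃ r, W.card = r + 1 ∧ C ∈ W ∧
    r ≤ (P.filter (fun e => c (tl e) ∈ W ∧ c (hd e) ∈ W)).card ∧
    (∀ A ∈ W, A ∈ L) ∧ Le (oL W) r ∧ Le (iF W) r ∧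
    (C ≠ (0, (n : ℤ)) → Le (oS W) (r + 2) ∧ Le (iS W) (r + 2) ∧ Le (iD W) (r + 1))
  obtain ⟨W, ⟨r, hcard, hCW, hr, hWL, hoL, hiF, hrest⟩, hQ⟩ :
      ∃ W, G W ∧ (∀ p ∈ P, c (tl p) ∈ W ↔ c (hd p) ∈ W) := by
    apply exists_max G (fun W => ∀ p ∈ P, c (tl p) ∈ W ↔ c (hd p) ∈ W) (P.card + 1) {C}
    · refine ⟨0, by simp, by simp, by simp, by simpa using hCL, ⟨∅, ?_, by simp⟩, ⟨∅, ?_, by simp⟩, ?_⟩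
      · rintro e ⟨⟨h1, h2, h3⟩, h4, h5⟩
        have := hI.edge2 e h1
        rw [Finset.mem_singleton] at h2
        rw [h2] at this
        omega
      · rintro e ⟨⟨h1, h2, h3⟩, h4⟩
        have := hI.edge1 e h1
        rw [Finset.mem_singleton] at h2
        rw [h2] at this
        omega
      · intro hCn
        refine ⟨(hI.outs C hC0 hCn).mono ?_ le_rfl, (hI.ins C hC0 hCn).mono ?_ le_rfl,
          (hI.dn C hC0 hCn).mono ?_ le_rfl⟩
        · rintro e ⟨h1, h2, h3⟩
          rw [Finset.mem_singleton] at h2 h3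
          exact ⟨h1, h2, h3⟩
        · rintro e ⟨h1, h2, h3⟩
          rw [Finset.mem_singleton] at h2 h3
          exact ⟨h1, h2, h3⟩
        · rintro e ⟨⟨h1, h2, h3⟩, h4⟩
          rw [Finset.mem_singleton] at h2
          exact ⟨h1, h2, h4⟩
    · rintro W ⟨r, h1, -, h2, -⟩
      have := Finset.card_filter_le P (fun e => c (tl e) ∈ W ∧ c (hd e) ∈ W)
      omega
    · rintro W ⟨r, hcard, hCW, hr, hWL, hoL, hiF, hrest⟩ hQ
      obtain ⟨p, hpP, A, hAW, hpA⟩ : ∃ p ∈ P, ∃ A, A ∉ W ∧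
          ((c (tl p) ∈ W ∧ c (hd p) = A) ∨ (c (tl p) = A ∧ c (hd p) ∈ W)) := by
        by_contra hcon
        push Not at hcon
        apply hQ
        intro p hp
        have h1 := hcon p hp (c (hd p))
        have h2 := hcon p hp (c (tl p))
        grind
      have hpF := hP hpP
      have hgrow := filter_grow hpP hAW hpA hr
      have hAL : A ∈ L := by
        rcases hpA with ⟨h1, h2⟩ | ⟨h1, h2⟩
        · exact h2 ▸ hLh p hpP
        · exact h1 ▸ hLt p hpP
      have hA0 := (hLr A hAL).1
      have hAm : A.2 ≤ C.2 := hCmax A hAL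
      have hAC : A ≠ C := fun h => hAW (h ▸ hCW)
      have hAn : A ≠ (0, (n : ℤ)) := by
        intro h
        rcases hCr with h' | h'
        · exact hAC (h.trans h'.symm)
        · rw [h] at hAm
          simp only at hAm
          omega
      have hO := hI.outs A hA0 hAn
      have hN := hI.ins A hA0 hAn
      have hD := hI.dn A hA0 hAn
      have hpO : c (tl p) = A → p ∈ {e | e ∈ F ∧ c (tl e) = A ∧ c (hd e) ≠ A} := by
        intro h
        refine ⟨hpF, h, ?_⟩
        grind
      have hpN : c (hd p) = A → p ∈ {e | e ∈ F ∧ c (hd e) = A ∧ c (tl e) ≠ A} := by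
        intro h
        refine ⟨hpF, h, ?_⟩
        grind
      have hno : p ∉ oS (insert A W) := by
        rintro ⟨h1, h2, h3⟩
        simp only [Finset.mem_insert] at h2 h3
        grind
      have hni : p ∉ iS (insert A W) := by
        rintro ⟨h1, h2, h3⟩
        simp only [Finset.mem_insert] at h2 h3
        grind
      have hsubo : ∀ e ∈ oS (insert A W), e ∈ oS W ∨ (e ∈ F ∧ c (tl e) = A ∧ c (hd e) ≠ A) := by
        rintro e ⟨h1, h2, h3⟩
        simp only [Finset.mem_insert, not_or] at h2 h3
        rcases h2 with h2 | h2
        · exact Or.inr ⟨h1, h2, h3.1⟩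
        · exact Or.inl ⟨h1, h2, h3.2⟩
      have hsubi : ∀ e ∈ iS (insert A W), e ∈ iS W ∨ (e ∈ F ∧ c (hd e) = A ∧ c (tl e) ≠ A) := by
        rintro e ⟨h1, h2, h3⟩
        simp only [Finset.mem_insert, not_or] at h2 h3
        rcases h2 with h2 | h2
        · exact Or.inr ⟨h1, h2, h3.1⟩
        · exact Or.inl ⟨h1, h2, h3.2⟩
      refine ⟨insert A W, ⟨r + 1, ?_, ?_, hgrow, ?_, ?_, ?_, ?_⟩, ?_⟩
      · rw [Finset.card_insert_of_notMem hAW, hcard]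
      · exact Finset.mem_insert_of_mem hCW
      · intro D hD
        rcases Finset.mem_insert.1 hD with rfl | h
        · exact hAL
        · exact hWL D h
      · -- oL
        have hsub : oL (insert A W) ⊆ oL W ∪ {e | e ∈ F ∧ c (tl e) = A ∧ c (hd e) ≠ A} := by
          rintro e ⟨h1, h2⟩
          rcases hsubo e h1 with h | h
          · exact Or.inl ⟨h, h2⟩
          · exact Or.inr h
        have hnp : p ∉ oL (insert A W) := fun h => hno h.1
        rcases hpA with ⟨h1, h2⟩ | ⟨h1, h2⟩
        · by_cases ha : A.2 < C.2 ∧ 1 < C.2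
          · refine Le.comb hoL hO hsub hnp (Or.inr (Or.inl ⟨⟨⟨hpF, h1, ?_⟩, ?_⟩, by omega⟩))
            · rw [h2]; exact hAW
            · rw [h2]; exact ha
          · refine hoL.mono ?_ (Nat.le_succ r)
            intro e he
            rcases hsub he with h | ⟨h3, h4, h5⟩
            · exact h
            · exfalso
              obtain ⟨-, h6, h7⟩ := he
              have := hI.edge2 e h3
              rw [h4] at this
              omega
        · exact Le.comb hoL hO hsub hnp (Or.inr (Or.inr (Or.inl ⟨hpO h1, by omega⟩)))
      · -- iF
        have hsub : iF (insert A W) ⊆ iF W ∪ {e | e ∈ F ∧ c (hd e) = A ∧ c (tl e) ≠ A} := by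
          rintro e ⟨h1, h2⟩
          rcases hsubi e h1 with h | h
          · exact Or.inl ⟨h, h2⟩
          · exact Or.inr h
        have hnp : p ∉ iF (insert A W) := fun h => hni h.1
        by_cases ha : A.2 < C.2 - 1
        · rcases hpA with ⟨h1, h2⟩ | ⟨h1, h2⟩
          · exact Le.comb hiF hN hsub hnp (Or.inr (Or.inr (Or.inl ⟨hpN h2, by omega⟩)))
          · refine Le.comb hiF hN hsub hnp (Or.inr (Or.inl ⟨⟨⟨hpF, h2, ?_⟩, ?_⟩, by omega⟩))
            · rw [h1]; exact hAW
            · rw [h1]; exact ha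
        · refine Le.comb (p := p) hiF hD ?_ hnp (Or.inl le_rfl)
          intro e he
          rcases hsub he with h | ⟨h3, h4, h5⟩
          · exact Or.inl h
          · right
            refine ⟨h3, h4, ?_⟩
            have := he.2
            omega
      · intro hCn
        obtain ⟨ho, hi, hid⟩ := hrest hCn
        refine ⟨?_, ?_, ?_⟩
        · have hsub : oS (insert A W) ⊆ oS W ∪ {e | e ∈ F ∧ c (tl e) = A ∧ c (hd e) ≠ A} := hsubo
          rcases hpA with ⟨h1, h2⟩ | ⟨h1, h2⟩
          · refine Le.comb ho hO hsub hno (Or.inr (Or.inl ⟨⟨hpF, h1, ?_⟩, by omega⟩))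
            rw [h2]; exact hAW
          · exact Le.comb ho hO hsub hno (Or.inr (Or.inr (Or.inl ⟨hpO h1, by omega⟩)))
        · have hsub : iS (insert A W) ⊆ iS W ∪ {e | e ∈ F ∧ c (hd e) = A ∧ c (tl e) ≠ A} := hsubi
          rcases hpA with ⟨h1, h2⟩ | ⟨h1, h2⟩
          · exact Le.comb hi hN hsub hni (Or.inr (Or.inr (Or.inl ⟨hpN h2, by omega⟩)))
          · refine Le.comb hi hN hsub hni (Or.inr (Or.inl ⟨⟨hpF, h2, ?_⟩, by omega⟩))
            rw [h1]; exact hAW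
        · have hsub : iD (insert A W) ⊆ iD W ∪ {e | e ∈ F ∧ c (hd e) = A ∧ c (tl e) ≠ A} := by
            rintro e ⟨h1, h2⟩
            rcases hsubi e h1 with h | h
            · exact Or.inl ⟨h, h2⟩
            · exact Or.inr h
          have hnp : p ∉ iD (insert A W) := fun h => hni h.1
          by_cases ha : A.2 < C.2
          · rcases hpA with ⟨h1, h2⟩ | ⟨h1, h2⟩
            · exact Le.comb hid hN hsub hnp (Or.inr (Or.inr (Or.inl ⟨hpN h2, by omega⟩)))
            · refine Le.comb hid hN hsub hnp (Or.inr (Or.inl ⟨⟨⟨hpF, h2, ?_⟩, ?_⟩, by omega⟩))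
              · rw [h1]; exact hAW
              · rw [h1]; exact ha
          · refine Le.comb (p := p) hid hD ?_ hnp (Or.inl le_rfl)
            intro e he
            rcases hsub he with h | ⟨h3, h4, h5⟩
            · exact Or.inl h
            · right
              refine ⟨h3, h4, ?_⟩
              have := he.2
              omega
      · rw [Finset.card_insert_of_notMem hAW]; omega
  -- blocking
  obtain ⟨Bo, hBo1, hBo2, hBo3, hBo4⟩ : ∃ B : Finset Edge, (B : Set Edge) ⊆ oS W ∧ B.card ≤ r ∧
      oL W ⊆ ↑B ∧ (C ≠ (0, (n : ℤ)) → Le (oS W \ ↑B) 2) := by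
    by_cases hCn : C = (0, (n : ℤ))
    · obtain ⟨B, h1, h2⟩ := hoL.toFinset
      refine ⟨B, ?_, h2, h1.ge, fun h => absurd hCn h⟩
      rw [h1]
      exact fun e he => he.1
    · obtain ⟨ho, hi, hid⟩ := hrest hCn
      obtain ⟨B, h1, h2, h3, h4, h5⟩ := exists_block (S1 := oL W) (S2 := oL W) (S := oS W)
        subset_rfl (fun e he => he.1) hoL (hoL.mono subset_rfl (Nat.le_succ r)) ho
      exact ⟨B, h1, h2, h3, fun _ => h5⟩
  obtain ⟨Bi, hBi1, hBi2, hBi3, hBi4⟩ : ∃ B : Finset Edge, (B : Set Edge) ⊆ iS W ∧ B.card ≤ r ∧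
      iF W ⊆ ↑B ∧ (C ≠ (0, (n : ℤ)) → Le (iS W \ ↑B) 2 ∧ Le (iD W \ ↑B) 1) := by
    by_cases hCn : C = (0, (n : ℤ))
    · obtain ⟨B, h1, h2⟩ := hiF.toFinset
      refine ⟨B, ?_, h2, h1.ge, fun h => absurd hCn h⟩
      rw [h1]
      exact fun e he => he.1
    · obtain ⟨ho, hi, hid⟩ := hrest hCn
      obtain ⟨B, h1, h2, h3, h4, h5⟩ := exists_block (S1 := iF W) (S2 := iD W) (S := iS W)
        (fun e he => ⟨he.1, by have := he.2; omega⟩) (fun e he => he.1) hiF hid hi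
      exact ⟨B, h1, h2, h3, fun _ => ⟨h5, h4⟩⟩
  have hWm : ∀ A ∈ W, A.2 ≤ C.2 := fun A hA => hCmax A (hWL A hA)
  have hbotW : ((0, 0) : Vtx) ∉ W := fun h => (hLr _ (hWL _ h)).1 rfl
  have htopW : ((0, (n : ℤ)) : Vtx) ∈ W → C = (0, (n : ℤ)) := by
    intro h
    have := hWm _ h
    simp only at this
    rcases hCr with h' | h'
    · exact h'
    · omega
  have hF' : ∀ e, e ∈ F \ (↑(Bo ∪ Bi) : Set Edge) → e ∈ F ∧ e ∉ (Bo : Set Edge) ∧ e ∉ (Bi : Set Edge) := by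
    rintro e ⟨h1, h2⟩
    rw [Finset.coe_union] at h2
    exact ⟨h1, fun h => h2 (Or.inl h), fun h => h2 (Or.inr h)⟩
  refine ⟨P.filter (fun e => c (tl e) ∈ W ∧ c (hd e) ∈ W), Bo ∪ Bi, mrg c W C,
    Finset.filter_subset _ _, ⟨p0, ?_⟩, ?_, ?_, ?_, ?_, ?_⟩
  · have := hQ p0 hp0P
    simp only [Finset.mem_filter]
    refine ⟨hp0P, ?_⟩
    grind
  · intro e he
    rw [Finset.coe_union] at he
    rcases he with he | he
    · obtain ⟨h1, h2, h3⟩ := hBo1 he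
      refine ⟨h1, fun hP => ?_⟩
      have := hQ e hP
      grind
    · obtain ⟨h1, h2, h3⟩ := hBi1 he
      refine ⟨h1, fun hP => ?_⟩
      have := hQ e hP
      grind
  · have := Finset.card_union_le Bo Bi
    omega
  · constructor
    · intro v
      by_cases h : c v ∈ W
      · rw [mrg_in h]; exact Or.inr hCr
      · rw [mrg_out h]; exact hI.range v
    · intro x
      rw [mrg_out]
      · exact hI.bot x
      · rw [hI.bot]; exact hbotW
    · intro x
      by_cases h : c (x, (n : ℤ)) ∈ W
      · rw [mrg_in h]
        rw [hI.top] at h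
        exact htopW h
      · rw [mrg_out h]
        exact hI.top x
    · intro e he
      obtain ⟨he, ho, hi⟩ := hF' e he
      have e1 := hI.edge1 e he
      by_cases h1 : c (hd e) ∈ W
      · rw [mrg_in h1]
        by_cases h2 : c (tl e) ∈ W
        · rw [mrg_in h2]; omega
        · rw [mrg_out h2]
          by_contra h
          exact hi (hBi3 ⟨⟨he, h1, h2⟩, by omega⟩)
      · rw [mrg_out h1]
        by_cases h2 : c (tl e) ∈ W
        · rw [mrg_in h2]
          have := hWm _ h2
          omega
        · rwa [mrg_out h2]
    · intro e he
      obtain ⟨he, ho, hi⟩ := hF' e he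
      have e1 := hI.edge2 e he
      by_cases h1 : c (hd e) ∈ W
      · rw [mrg_in h1]
        by_cases h2 : c (tl e) ∈ W
        · rw [mrg_in h2]; omega
        · rw [mrg_out h2]
          have := hWm _ h1
          omega
      · rw [mrg_out h1]
        by_cases h2 : c (tl e) ∈ W
        · rw [mrg_in h2]
          by_contra h
          exact ho (hBo3 ⟨⟨he, h2, h1⟩, by omega⟩)
        · rwa [mrg_out h2]
    · intro D hD0 hDn
      by_cases hDC : D = C
      · refine (hBo4 (hDC ▸ hDn)).mono ?_ le_rfl
        rintro e ⟨he, h1, h2⟩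
        obtain ⟨he, ho, hi⟩ := hF' e he
        refine ⟨⟨he, ?_⟩, ho⟩
        unfold mrg at h1 h2
        split_ifs at h1 h2 <;> grind
      · refine (hI.outs D hD0 hDn).mono ?_ le_rfl
        rintro e ⟨he, h1, h2⟩
        unfold mrg at h1 h2
        refine ⟨he.1, ?_⟩
        split_ifs at h1 h2 <;> grind
    · intro D hD0 hDn
      by_cases hDC : D = C
      · refine (hBi4 (hDC ▸ hDn)).1.mono ?_ le_rfl
        rintro e ⟨he, h1, h2⟩
        obtain ⟨he, ho, hi⟩ := hF' e he
        refine ⟨⟨he, ?_⟩, hi⟩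
        unfold mrg at h1 h2
        split_ifs at h1 h2 <;> grind
      · refine (hI.ins D hD0 hDn).mono ?_ le_rfl
        rintro e ⟨he, h1, h2⟩
        unfold mrg at h1 h2
        refine ⟨he.1, ?_⟩
        split_ifs at h1 h2 <;> grind
    · intro D hD0 hDn
      by_cases hDC : D = C
      · refine (hBi4 (hDC ▸ hDn)).2.mono ?_ le_rfl
        rintro e ⟨he, h1, h2⟩
        obtain ⟨he, ho, hi⟩ := hF' e he
        have h3 : c (tl e) ∉ W := by
          intro h
          rw [mrg_in h, hDC] at h2
          omega
        have h4 : c (hd e) ∈ W := by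
          by_contra h
          rw [mrg_out h] at h1
          rw [h1, hDC] at h
          exact h hCW
        rw [mrg_out h3, hDC] at h2
        exact ⟨⟨⟨he, h4, h3⟩, h2⟩, hi⟩
      · refine (hI.dn D hD0 hDn).mono ?_ le_rfl
        rintro e ⟨he, h1, h2⟩
        have h3 : c (hd e) ∉ W := by
          intro h3
          rw [mrg_in h3] at h1
          exact hDC h1.symm
        rw [mrg_out h3] at h1
        refine ⟨he.1, h1, ?_⟩
        by_cases h4 : c (tl e) ∈ W
        · rw [mrg_in h4] at h2
          have := hWm _ h4
          omega
        · rwa [mrg_out h4] at h2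
  · intro u v h
    simp only [mrg, h]
  · intro e he
    simp only [Finset.mem_filter] at he
    rw [mrg_in he.2.1, mrg_in he.2.2]

lemma respond {n : ℕ} : ∀ (k : ℕ) {F : Set Edge} {c : Vtx → Vtx} (_ : Inv n F c) (P : Finset Edge)
    (_ : P.card = k) (_ : (P : Set Edge) ⊆ F) (_ : P.card < n),
    ∃ (B : Finset Edge) (c' : Vtx → Vtx), (B : Set Edge) ⊆ F \ ↑P ∧
      B.card ≤ 2 * P.card ∧ Inv n ((F \ ↑P) \ ↑B) c' ∧ (∀ u v, c u = c v → c' u = c' v) ∧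
      ∀ e ∈ P, c' (tl e) = c' (hd e) := by
  intro k
  induction k using Nat.strong_induction_on with
  | _ k ih =>
  intro F c hI P hk hP hn
  rcases P.eq_empty_or_nonempty with rfl | hne
  · exact ⟨∅, c, by simp, by simp, by simpa using hI, fun _ _ h => h, by simp⟩
  · obtain ⟨P1, B1, c1, h1, h2, h3, h4, h5, h6, h7⟩ : ∃ (P1 B : Finset Edge) (c' : Vtx → Vtx),
        P1 ⊆ P ∧ P1.Nonempty ∧ (B : Set Edge) ⊆ F \ ↑P ∧
        B.card ≤ 2 * P1.card ∧ Inv n (F \ ↑B) c' ∧ (∀ u v, c u = c v → c' u = c' v) ∧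
        ∀ e ∈ P1, c' (tl e) = c' (hd e) := by
      by_cases h : ∃ p ∈ P, c (tl p) = (0, 0) ∨ c (hd p) = (0, 0)
      · obtain ⟨p, hp, hp'⟩ := h
        exact step_bot hI P hP hn p hp hp'
      · push Not at h
        exact step_top hI P hP hne h
    have hcs := Finset.card_sdiff_of_subset h1
    have hc1 := Finset.card_le_card h1
    have hpos := h2.card_pos
    have hI1 : Inv n ((F \ ↑B1) \ ↑P1) c1 := h5.anti Set.sdiff_subset
    have hsub : (↑(P \ P1) : Set Edge) ⊆ (F \ ↑B1) \ ↑P1 := by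
      intro e he
      rw [Finset.coe_sdiff] at he
      exact ⟨⟨hP he.1, fun hb => (h3 hb).2 he.1⟩, he.2⟩
    obtain ⟨B2, c2, g1, g2, g3, g4, g5⟩ := ih (P \ P1).card (by omega) hI1 (P \ P1) rfl hsub (by omega)
    refine ⟨B1 ∪ B2, c2, ?_, ?_, ?_, ?_, ?_⟩
    · rw [Finset.coe_union]
      refine Set.union_subset h3 ?_
      intro e he
      obtain ⟨⟨⟨a1, a2⟩, a3⟩, a4⟩ := g1 he
      refine ⟨a1, fun h => a4 ?_⟩
      rw [Finset.coe_sdiff]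
      exact ⟨h, a3⟩
    · have := Finset.card_union_le B1 B2
      omega
    · refine g3.anti ?_
      rintro e ⟨⟨a1, a2⟩, a3⟩
      rw [Finset.coe_union] at a3
      refine ⟨⟨⟨⟨a1, fun h => a3 (Or.inl h)⟩, fun h => a2 (h1 h)⟩, fun h => a2 ?_⟩, fun h => a3 (Or.inr h)⟩
      rw [Finset.coe_sdiff] at h
      exact h.1
    · exact fun u v h => g4 u v (h6 u v h)
    · intro e he
      by_cases h : e ∈ P1
      · exact g4 _ _ (h7 e h)
      · exact g5 e (Finset.mem_sdiff.2 ⟨he, h⟩)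

def Safe (n : ℕ) (V K : Finset Edge) : Prop :=
  ∃ c, Inv n (sInfEdges n \ ↑K) c ∧ ∀ e ∈ V, c (tl e) = c (hd e)

lemma sInf_infinite (n : ℕ) (hn : 1 ≤ n) : (sInfEdges n).Infinite := by
  apply Set.infinite_of_injective_forall_mem (f := fun x : ℤ => (((x, 1), true) : Edge))
  · intro a b h
    simpa using h
  · intro x
    simp [sInfEdges, ends]
    omega

lemma safe_respond {n q : ℕ} (hn : q + 1 ≤ n) {V K P : Finset Edge} (hS : Safe n V K)
    (hP : (P : Set Edge) ⊆ sInfEdges n \ ↑K) (hq : P.card ≤ q) :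
    ∃ B : Finset Edge, (B : Set Edge) ⊆ sInfEdges n \ ↑(K ∪ P) ∧ B.card = 2 * P.card ∧
      Safe n (V ∪ P) ((K ∪ P) ∪ B) := by
  obtain ⟨c, hI, hV⟩ := hS
  obtain ⟨B, c', h1, h2, h3, h4, h5⟩ := respond P.card hI P rfl hP (by omega)
  have hinf : (sInfEdges n \ ↑(K ∪ P)).Infinite :=
    (sInf_infinite n (by omega)).sdiff (Finset.finite_toSet _)
  have hBs : (B : Set Edge) ⊆ sInfEdges n \ ↑(K ∪ P) := by
    intro e he
    obtain ⟨⟨a1, a2⟩, a3⟩ := h1 he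
    refine ⟨a1, ?_⟩
    rw [Finset.coe_union]
    rintro (h | h)
    exacts [a2 h, a3 h]
  obtain ⟨B', b1, b2, b3⟩ : ∃ B' : Finset Edge, (B : Set Edge) ⊆ ↑B' ∧
      (B' : Set Edge) ⊆ sInfEdges n \ ↑(K ∪ P) ∧ B'.card = 2 * P.card := by
    obtain ⟨T, t1, t2⟩ := (hinf.sdiff B.finite_toSet).exists_subset_card_eq (2 * P.card - B.card)
    refine ⟨B ∪ T, by simp, ?_, ?_⟩
    · rw [Finset.coe_union]
      exact Set.union_subset hBs (t1.trans Set.sdiff_subset)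
    · rw [Finset.card_union_of_disjoint, t2]
      · omega
      · rw [Finset.disjoint_left]
        exact fun e he ht => (t1 ht).2 he
  refine ⟨B', b2, b3, c', h3.anti ?_, ?_⟩
  · rintro e ⟨a1, a2⟩
    simp only [Finset.coe_union, Set.mem_union, not_or] at a2
    exact ⟨⟨⟨a1, a2.1.1⟩, a2.1.2⟩, fun h => a2.2 (b1 h)⟩
  · intro e he
    rcases Finset.mem_union.1 he with h | h
    · exact h4 _ _ (hV e h)
    · exact h5 e h

lemma safe_no_crossing {n : ℕ} (hn : 1 ≤ n) {V K : Finset Edge} (hS : Safe n V K) :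
    ¬ HasDualCrossing n (dualEdge '' ↑V) := by
  obtain ⟨c, hI, hV⟩ := hS
  rintro ⟨l, ⟨v, hv, hvn⟩, ⟨w, hw, hw0⟩, hl⟩
  have key : ∀ (l : List DVtx) (v w : DVtx), l.head? = some v → l.getLast? = some w →
      (∀ p ∈ cp l, ∃ d ∈ dualEdge '' (V : Set Edge), joins d p.1 p.2) → c v = c w := by
    intro l
    induction l with
    | nil => intro v w h; simp at h
    | cons a l ih =>
      intro v w h1 h2 h3
      simp only [List.head?_cons, Option.some.injEq] at h1
      subst h1
      cases l with
      | nil =>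
        simp at h2
        rw [h2]
      | cons b l =>
        have hb := ih b w rfl (by simpa using h2) (fun p hp => h3 p (by
          simp only [cp, List.tail_cons, List.zip_cons_cons, List.mem_cons] at hp ⊢
          exact Or.inr hp))
        rw [← hb]
        obtain ⟨d, ⟨e, he, rfl⟩, hj⟩ := h3 (a, b) (by simp [cp])
        have hc := hV e he
        obtain ⟨⟨x, y⟩, t⟩ := e
        cases t <;> simp [joins, ends, dualEdge, tl, hd] at hj hc <;>
          rcases hj with ⟨rfl, rfl⟩ | ⟨rfl, rfl⟩ <;> simp [hc]
  have h := key l v w hv hw hl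
  obtain ⟨v1, v2⟩ := v
  obtain ⟨w1, w2⟩ := w
  simp only at hvn hw0
  subst hvn hw0
  rw [hI.bot, hI.top] at h
  simp at h
  omega

lemma histD_len (σV σH : DStrategy) (t : ℕ) : Even (histD σV σH t).length := by
  induction t with
  | zero => simp [histD]
  | succ t ih =>
    simp only [histD, List.length_append, List.length_cons, List.length_nil]
    exact ih.add (by decide)

lemma altUnion_append (h g : List (Finset Edge)) (he : Even h.length) :
    altUnion true (h ++ g) = altUnion true h ∪ altUnion true g := by
  induction h using List.twoStepInduction with
  | nil => simp [altUnion]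
  | singleton x => simp at he
  | cons_cons x y xs ih _ =>
    have : Even xs.length := by
      simp only [List.length_cons] at he
      grind
    simp only [List.cons_append, altUnion]
    rw [ih this, Finset.union_assoc]

lemma allClaimed_append (h g : List (Finset Edge)) :
    allClaimed (h ++ g) = allClaimed h ∪ allClaimed g := by
  induction h with
  | nil => simp [allClaimed]
  | cons x xs ih =>
    simp only [allClaimed, List.cons_append, List.foldr_cons] at ih ⊢
    rw [ih, Finset.union_assoc]

def GoodReply (n : ℕ) (h : List (Finset Edge)) (B : Finset Edge) : Prop :=
  (B : Set Edge) ⊆ sInfEdges n \ ↑(allClaimed h) ∧ B.card = 2 * (h.getLast?.getD ∅).card ∧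
    Safe n (altUnion true h) (allClaimed h ∪ B)

open Classical in
noncomputable def strat (n : ℕ) : DStrategy := fun h =>
  if hB : ∃ B, GoodReply n h B then hB.choose else ∅

lemma strat_spec {n : ℕ} {h : List (Finset Edge)} (hB : ∃ B, GoodReply n h B) :
    GoodReply n h (strat n h) := by
  unfold strat
  rw [dif_pos hB]
  exact hB.choose_spec

lemma reply_ok {n q : ℕ} (hn : q + 1 ≤ n) {σV : DStrategy} (hV : VLegal n q σV (strat n)) (t : ℕ)
    (hS : Safe n (altUnion true (histD σV (strat n) t)) (allClaimed (histD σV (strat n) t))) :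
    GoodReply n (histD σV (strat n) t ++ [σV (histD σV (strat n) t)])
      (strat n (histD σV (strat n) t ++ [σV (histD σV (strat n) t)])) := by
  apply strat_spec
  obtain ⟨h1, h2, h3⟩ := hV t
  obtain ⟨B, b1, b2, b3⟩ := safe_respond hn hS h1 h3
  refine ⟨B, ?_, ?_, ?_⟩
  · rw [allClaimed_append]
    simpa [allClaimed] using b1
  · simpa using b2
  · rw [allClaimed_append, altUnion_append _ _ (histD_len _ _ _)]
    simpa [allClaimed, altUnion] using b3

lemma safe_all {n q : ℕ} (hq : 1 ≤ q) (hn : q + 1 ≤ n) {σV : DStrategy}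
    (hV : VLegal n q σV (strat n)) (t : ℕ) :
    Safe n (altUnion true (histD σV (strat n) t)) (allClaimed (histD σV (strat n) t)) := by
  induction t with
  | zero =>
    refine ⟨c0 n, (Inv.init n (by omega)).anti Set.sdiff_subset, ?_⟩
    simp [histD, altUnion]
  | succ t ih =>
    obtain ⟨-, -, h⟩ := reply_ok hn hV t ih
    rw [allClaimed_append, altUnion_append _ _ (histD_len _ _ _)] at h
    simp only [histD]
    rw [allClaimed_append, altUnion_append _ _ (histD_len _ _ _)]
    simpa [allClaimed, altUnion, Finset.union_assoc] using h

/-- **Theorem (double-response game).** If `n ≥ q + 1`, then the horizontal player `H`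
has a winning strategy for the `q`-double-response game on `S_{∞×n}`: she can forever
prevent the vertical player `V` from claiming a set of edges whose dual edges contain a
top-bottom crossing dual path. -/
theorem horizontal_player_wins_double_response_game
    (n q : ℕ) (hq : 1 ≤ q) (hn : q + 1 ≤ n) :
    ∃ σH : DStrategy, ∀ σV : DStrategy, VLegal n q σV σH →
      HLegal n σV σH ∧
      ∀ t, ¬ HasDualCrossing n (dualEdge '' ↑(altUnion true (histD σV σH t))) := by
  refine ⟨strat n, fun σV hV => ⟨fun t => ?_, fun t => ?_⟩⟩
  · obtain ⟨h1, h2, -⟩ := reply_ok hn hV t (safe_all hq hn hV t)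
    refine ⟨h1, ?_⟩
    simpa using h2
  · exact safe_no_crossing (by omega) (safe_all hq hn hV t)

end CrossingGames
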